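/- arXiv:math/0009090 — 5 statements merged into one kernel-verified Lean document; each statement's English description precedes it below -/
import Mathlib

section
/- There is no weakly self-avoiding word over the binary alphabet {0,1} of length greater than 13. -/
/-- The factor `x[i..2i]` of a 1-indexed finite word `x`. -/
def factorAt {α : Type*} (x : List α) (i : ℕ) : List α :=
  (x.drop (i - 1)).take (i + 1)

/-- A finite word `x` of length `n` is weakly self-avoiding if for all `i, j` with
`1 ≤ i < j` and `2j ≤ n`, the word `x[i..2i]` is not a factor of `x[j..2j]`. -/
def WeaklySelfAvoiding {α : Type*} (x : List α) : Prop :=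
  ∀ i j : ℕ, 1 ≤ i → i < j → 2 * j ≤ x.length → ¬ (factorAt x i <:+: factorAt x j)

/-!
An occurrence of `x[i..2i]` at a later position `p` with `p + i ≤ 2m ≤ n` lies inside `x[j..2j]`
for `j = min p m`, so in a weakly self-avoiding word no `x[i..2i]` recurs anywhere in `x[i+1..2m]`.
Take `m = 7` and a binary word, and write `0` for its first letter and `1` for the other one.

* If `x` starts with `01`, then `01` does not recur, so `x[2..14]` is `1^a 0^b`; as `x[2..4]` does
  not recur, `a ≤ 3`, and then `x[5..10]` consists of zeros and recurs one step later.
* If `x` starts with `0010`, then `00` and `010` do not recur, so `x` starts with `001011`, and the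
  next `0` would lie in a recurrence `1011` of `x[3..6]`. Hence `x[5..10]` consists of ones and
  recurs one step later.
* If `x` starts with `0011`, then `00` and `011` do not recur, so letters alternate from the first
  `0` after position 2. As `x[3..6]` does not recur, they alternate from position 6 at the latest,
  and `x[6..12]` recurs two steps later.
-/

variable {α : Type*}

theorem take_drop_isInfix_factorAt (x : List α) {i j p : ℕ} (hj : 1 ≤ j) (hjp : j ≤ p)
    (hp : p + i ≤ 2 * j) : (x.drop (p - 1)).take (i + 1) <:+: factorAt x j := by
  have h : (x.drop (p - 1)).take (i + 1) = ((factorAt x j).drop (p - j)).take (i + 1) := by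
    rw [factorAt, List.drop_take, List.drop_drop, List.take_take]
    congr 2 <;> omega
  rw [h]
  exact (List.take_prefix _ _).isInfix.trans (List.drop_suffix _ _).isInfix

theorem WeaklySelfAvoiding.factorAt_ne_take_drop {x : List α} (hx : WeaklySelfAvoiding x)
    {i p m : ℕ} (hi : 1 ≤ i) (hip : i < p) (hp : p + i ≤ 2 * m) (hm : 2 * m ≤ x.length) :
    factorAt x i ≠ (x.drop (p - 1)).take (i + 1) := by
  intro h
  refine hx i (min p m) hi (by omega) (by omega) (h ▸ ?_)
  exact take_drop_isInfix_factorAt x (by omega) (min_le_left p m) (by omega)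

/-- The word `w 1, …, w N` (the value `w 0` is ignored) is nonrecurring if none of its factors
`w[i..2i]` occurs again at a later position `p`. This is the form in which self-avoidance is
used; words are sequences here so that their letters can be compared without bounds proofs. -/
def Nonrecurring (w : ℕ → α) (N : ℕ) : Prop :=
  ∀ i p : ℕ, 1 ≤ i → i < p → p + i ≤ N → ∃ t ≤ i, w (p + t) ≠ w (i + t)

theorem WeaklySelfAvoiding.nonrecurring_getD {x : List α} (hx : WeaklySelfAvoiding x) {m : ℕ}
    (hm : 2 * m ≤ x.length) (a : α) : Nonrecurring (fun k ↦ x.getD (k - 1) a) (2 * m) := by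
  intro i p hi hip hp
  by_contra! h
  refine hx.factorAt_ne_take_drop hi hip hp hm (List.ext_getElem ?_ fun t ht _ ↦ ?_)
  · simp only [factorAt, List.length_take, List.length_drop]
    omega
  · have hti : t ≤ i := by
      simp only [factorAt, List.length_take] at ht
      omega
    have hpt := h t hti
    rw [List.getD_eq_getElem _ _ (by omega), List.getD_eq_getElem _ _ (by omega)] at hpt
    simp only [factorAt, List.getElem_take, List.getElem_drop]
    convert hpt.symm using 2 <;> omega

namespace Nonrecurring

theorem apply_succ_ne_apply_two {w : ℕ → α} {N k : ℕ} (hw : Nonrecurring w N) (hk : 2 ≤ k)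
    (hkN : k < N) (h : w k = w 1) : w (k + 1) ≠ w 2 := by
  obtain ⟨t, ht, hne⟩ := hw 1 k le_rfl hk hkN
  interval_cases t
  · exact absurd h hne
  · exact hne

variable {w : ℕ → Fin 2} {N : ℕ}

theorem apply_one_eq_apply_two (hw : Nonrecurring w N) (hN : 11 ≤ N) : w 1 = w 2 := by
  by_contra h12
  have stays : ∀ k, 2 ≤ k → k < N → w k = w 1 → w (k + 1) = w 1 := by
    intro k hk hkN h
    have hk1 : w (k + 1) ≠ w 2 := hw.apply_succ_ne_apply_two hk hkN h
    omega
  obtain ⟨t, ht, hne⟩ := hw 2 3 (by omega) (by omega) (by omega)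
  have returns : w (3 + t) = w 1 := by
    have step : w (2 + t) = w 1 → w (2 + t + 1) = w 1 := stays _ (by omega) (by omega)
    grind
  have const : ∀ k, 3 + t ≤ k → k ≤ N → w k = w 1 := fun k hk ↦
    Nat.le_induction (fun _ ↦ returns)
      (fun k hk ih hkN ↦ stays k (by omega) hkN (ih (by omega))) k hk
  obtain ⟨s, hs, hne'⟩ := hw 5 6 (by omega) (by omega) (by omega)
  exact hne' ((const _ (by omega) (by omega)).trans (const _ (by omega) (by omega)).symm)

theorem apply_succ_ne_apply_one {k : ℕ} (hw : Nonrecurring w N) (hN : 11 ≤ N) (hk : 2 ≤ k)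
    (hkN : k < N) (h : w k = w 1) : w (k + 1) ≠ w 1 :=
  hw.apply_one_eq_apply_two hN ▸ hw.apply_succ_ne_apply_two hk hkN h

theorem apply_three_eq_apply_four (hw : Nonrecurring w N) (hN : 13 ≤ N) : w 3 = w 4 := by
  by_contra h34
  have isolated {k : ℕ} := hw.apply_succ_ne_apply_one (k := k) (by omega)
  have h12 : w 1 = w 2 := hw.apply_one_eq_apply_two (by omega)
  have h3 : w 3 ≠ w 1 := isolated le_rfl (by omega) h12.symm
  have h4 : w 4 = w 1 := by omega
  have h5 : w 5 ≠ w 1 := isolated (by omega) (by omega) h4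
  have spaced : ∀ k, 3 ≤ k → k + 2 ≤ N → w k = w 1 → w (k + 2) ≠ w 1 := by
    intro k hk hkN h
    have hk1 : w (k + 1) ≠ w 1 := isolated (by omega) (by omega) h
    obtain ⟨t, ht, hne⟩ := hw 2 k (by omega) (by omega) hkN
    interval_cases t <;> grind
  have h6 : w 6 ≠ w 1 := spaced 4 (by omega) (by omega) h4
  have const : ∀ k, 5 ≤ k → k ≤ 11 → w k ≠ w 1 := fun k hk ↦ by
    induction k, hk using Nat.le_induction with
    | base => exact fun _ ↦ h5
    | succ k hk ih =>
      intro hkN h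
      have : w k ≠ w 1 := ih (by omega)
      have hk2 : w (k + 2) ≠ w 1 := isolated (by omega) (by omega) h
      have hk3 : w (k + 3) ≠ w 1 := spaced (k + 1) (by omega) (by omega) h
      -- so `w[3..6]` recurs at position `k`
      obtain ⟨t, ht, hne⟩ := hw 3 k (by omega) (by omega) (by omega)
      interval_cases t <;> grind
  obtain ⟨t, ht, hne⟩ := hw 5 6 (by omega) (by omega) (by omega)
  have h6t : w (6 + t) ≠ w 1 := const _ (by omega) (by omega)
  have h5t : w (5 + t) ≠ w 1 := const _ (by omega) (by omega)
  omega

theorem lt_fourteen (hw : Nonrecurring w N) : N < 14 := by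
  by_contra! hN
  have isolated {k : ℕ} := hw.apply_succ_ne_apply_one (k := k) (by omega)
  have h12 : w 1 = w 2 := hw.apply_one_eq_apply_two (by omega)
  have h34 : w 3 = w 4 := hw.apply_three_eq_apply_four (by omega)
  have h3 : w 3 ≠ w 1 := isolated le_rfl (by omega) h12.symm
  have alternates : ∀ k, 3 ≤ k → k + 2 ≤ N → w (k + 1) ≠ w k → w (k + 2) ≠ w (k + 1) := by
    intro k hk hkN hne
    by_cases h : w k = w 1
    · -- otherwise `w[2..4]` recurs at position `k`
      obtain ⟨t, ht, hne'⟩ := hw 2 k (by omega) (by omega) hkN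
      interval_cases t <;> grind
    · have hk1 : w (k + 1) = w 1 := by omega
      have hk2 : w (k + 2) ≠ w 1 := isolated (by omega) (by omega) hk1
      exact fun heq ↦ hk2 (heq.trans hk1)
  obtain ⟨t, ht, hne⟩ := hw 3 4 (by omega) (by omega) (by omega)
  have alternating : ∀ k, 3 + t ≤ k → k + 1 ≤ N → w (k + 1) ≠ w k := fun k hk ↦
    Nat.le_induction (fun _ ↦ by grind)
      (fun k hk ih hkN ↦ alternates k (by omega) hkN (ih (by omega))) k hk
  obtain ⟨s, hs, hne'⟩ := hw 6 8 (by omega) (by omega) hN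
  have h7s : w (7 + s) ≠ w (6 + s) := by grind [alternating (6 + s)]
  have h8s : w (8 + s) ≠ w (7 + s) := by grind [alternating (7 + s)]
  omega

end Nonrecurring

theorem stmt_1 :
    ∀ x : List (Fin 2), 13 < x.length → ¬ WeaklySelfAvoiding x := by
  intro x hx hself
  have hw : Nonrecurring (fun k ↦ x.getD (k - 1) 0) (2 * 7) := hself.nonrecurring_getD hx 0
  exact hw.lt_fourteen.false
end

section
/- There are exactly 8 weakly self-avoiding binary words of length 13, namely 0010111111010, 0010111111011, 0011110101010, 0011110101011 and the four words obtained from these by exchanging 0 and 1. -/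
/-!
The definition only inspects the letters up to the largest even position, so weak self-avoidance
passes to prefixes, and appending one letter to a word of even length never destroys it. It is
also invariant under injective relabellings of the alphabet, in particular under exchanging `0`
and `1`. It therefore suffices to find the binary words of length `12` beginning with `0`, and
closure under prefixes allows a search which abandons a prefix as soon as it fails.
-/

section Words

variable {α β : Type*} {x y : List α}

theorem factorAt_append (x y : List α) {i : ℕ} (hi : 1 ≤ i) (hix : 2 * i ≤ x.length) :
    factorAt (x ++ y) i = factorAt x i := by
  unfold factorAt
  rw [List.drop_append_of_le_length (by lia),
    List.take_append_of_le_length (by rw [List.length_drop]; lia)]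

theorem factorAt_map (f : α → β) (x : List α) (i : ℕ) :
    factorAt (x.map f) i = (factorAt x i).map f := by
  simp only [factorAt, List.map_take, List.map_drop]

theorem infix_map_map_iff {f : α → β} (hf : Function.Injective f) :
    x.map f <:+: y.map f ↔ x <:+: y := by
  refine ⟨fun h => ?_, fun h => h.map f⟩
  obtain ⟨z, hzy, hzx⟩ := List.infix_map_iff.1 h
  rwa [hf.list_map hzx]

theorem WeaklySelfAvoiding.of_append (h : WeaklySelfAvoiding (x ++ y)) : WeaklySelfAvoiding x := by
  intro i j hi hij hj
  rw [← factorAt_append x y hi (by lia), ← factorAt_append x y (by lia) hj]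
  exact h i j hi hij (by rw [List.length_append]; lia)

theorem weaklySelfAvoiding_append_singleton_iff (hx : Even x.length) {a : α} :
    WeaklySelfAvoiding (x ++ [a]) ↔ WeaklySelfAvoiding x := by
  refine ⟨fun h => h.of_append, fun h i j hi hij hj => ?_⟩
  have hjx : 2 * j ≤ x.length := by
    rw [List.length_append, List.length_singleton] at hj
    grind
  rw [factorAt_append x [a] hi (by lia), factorAt_append x [a] (by lia) hjx]
  exact h i j hi hij hjx

theorem weaklySelfAvoiding_map_iff {f : α → β} (hf : Function.Injective f) :
    WeaklySelfAvoiding (x.map f) ↔ WeaklySelfAvoiding x := by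
  simp only [WeaklySelfAvoiding, List.length_map, factorAt_map, infix_map_map_iff hf]

theorem setOf_length_odd_weaklySelfAvoiding (m : ℕ) :
    {x : List α | x.length = 2 * m + 1 ∧ WeaklySelfAvoiding x} =
      Set.image2 (fun y a => y ++ [a]) {y | y.length = 2 * m ∧ WeaklySelfAvoiding y} Set.univ := by
  ext x
  constructor
  · rintro ⟨hlen, hx⟩
    obtain rfl | ⟨y, a, rfl⟩ := List.eq_nil_or_concat' x
    · simp at hlen
    · exact ⟨y, ⟨by simpa using hlen, hx.of_append⟩, a, Set.mem_univ a, rfl⟩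
  · rintro ⟨y, ⟨hlen, hy⟩, a, -, rfl⟩
    exact ⟨by simp [hlen], (weaklySelfAvoiding_append_singleton_iff (by simp [hlen])).2 hy⟩

end Words

section Search

variable {α : Type*}

theorem weaklySelfAvoiding_iff_forall_le (x : List α) :
    WeaklySelfAvoiding x ↔
      ∀ j ≤ x.length / 2, ∀ i < j, 1 ≤ i → ¬ (factorAt x i <:+: factorAt x j) :=
  ⟨fun h j hj i hij hi => h i j hi hij (by lia), fun h i j hi hij hj => h j (by lia) i hij hi⟩

instance [DecidableEq α] : DecidablePred (WeaklySelfAvoiding (α := α)) :=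
  fun x => decidable_of_iff' _ (weaklySelfAvoiding_iff_forall_le x)

variable [FinEnum α]

/-- The words `y` of length `n` for which `x ++ y` is weakly self-avoiding, computed by a
depth-first search that extends `x` letter by letter and stops at a prefix which is not weakly
self-avoiding. -/
def weaklySelfAvoidingContinuations : ℕ → List α → List (List α)
  | 0, x => if WeaklySelfAvoiding x then [[]] else []
  | n + 1, x =>
    if WeaklySelfAvoiding x then
      (FinEnum.toList α).flatMap fun a =>
        (weaklySelfAvoidingContinuations n (x ++ [a])).map (a :: ·)
    else []

theorem mem_weaklySelfAvoidingContinuations {n : ℕ} {x y : List α} :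
    y ∈ weaklySelfAvoidingContinuations n x ↔ y.length = n ∧ WeaklySelfAvoiding (x ++ y) := by
  induction n generalizing x y with
  | zero =>
    rw [weaklySelfAvoidingContinuations, List.length_eq_zero_iff]
    split_ifs <;> aesop
  | succ n ih =>
    rw [weaklySelfAvoidingContinuations]
    split_ifs with hx
    · cases y <;> simp [ih]
    · simpa using fun _ h => hx h.of_append

end Search

theorem setOf_weaklySelfAvoiding_eq_union_image_rev (n : ℕ) :
    {x : List (Fin 2) | x.length = n + 1 ∧ WeaklySelfAvoiding x} =
      (0 :: ·) '' {y | y.length = n ∧ WeaklySelfAvoiding (0 :: y)} ∪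
        (fun y => (0 :: y).map Fin.rev) '' {y | y.length = n ∧ WeaklySelfAvoiding (0 :: y)} := by
  ext x
  constructor
  · rintro ⟨hlen, hx⟩
    obtain ⟨a, y, rfl⟩ := List.exists_cons_of_length_eq_add_one hlen
    have hy : y.length = n := by simpa using hlen
    obtain rfl | rfl := Fin.exists_fin_two.1 ⟨a, rfl⟩
    · exact Or.inl ⟨y, ⟨hy, hx⟩, rfl⟩
    · have hrev : WeaklySelfAvoiding (0 :: y.map Fin.rev) :=
        (weaklySelfAvoiding_map_iff Fin.rev_injective).2 hx
      exact Or.inr ⟨y.map Fin.rev, ⟨by simpa using hy, hrev⟩, by simp [Function.comp_def]⟩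
  · rintro (⟨y, ⟨hlen, hy⟩, rfl⟩ | ⟨y, ⟨hlen, hy⟩, rfl⟩)
    · exact ⟨by simp [hlen], hy⟩
    · exact ⟨by simp [hlen], (weaklySelfAvoiding_map_iff Fin.rev_injective).2 hy⟩

theorem setOf_length_eleven_weaklySelfAvoiding_zero_cons :
    {y : List (Fin 2) | y.length = 11 ∧ WeaklySelfAvoiding (0 :: y)} =
      {[0, 1, 0, 1, 1, 1, 1, 1, 1, 0, 1], [0, 1, 1, 1, 1, 0, 1, 0, 1, 0, 1]} := by
  have search : weaklySelfAvoidingContinuations 11 [(0 : Fin 2)] =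
      [[0, 1, 0, 1, 1, 1, 1, 1, 1, 0, 1], [0, 1, 1, 1, 1, 0, 1, 0, 1, 0, 1]] := by
    decide +kernel
  ext y
  rw [Set.mem_ofPred_eq, ← List.singleton_append, ← mem_weaklySelfAvoidingContinuations, search]
  simp

theorem setOf_length_twelve_weaklySelfAvoiding :
    {x : List (Fin 2) | x.length = 12 ∧ WeaklySelfAvoiding x} =
      {[0, 0, 1, 0, 1, 1, 1, 1, 1, 1, 0, 1], [0, 0, 1, 1, 1, 1, 0, 1, 0, 1, 0, 1],
       [1, 1, 0, 1, 0, 0, 0, 0, 0, 0, 1, 0], [1, 1, 0, 0, 0, 0, 1, 0, 1, 0, 1, 0]} := by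
  rw [setOf_weaklySelfAvoiding_eq_union_image_rev 11,
    setOf_length_eleven_weaklySelfAvoiding_zero_cons, Set.image_pair, Set.image_pair,
    Set.insert_union, Set.singleton_union]
  rfl

theorem stmt_7 :
    {x : List (Fin 2) | x.length = 13 ∧ WeaklySelfAvoiding x} =
      {[0, 0, 1, 0, 1, 1, 1, 1, 1, 1, 0, 1, 0],
       [0, 0, 1, 0, 1, 1, 1, 1, 1, 1, 0, 1, 1],
       [0, 0, 1, 1, 1, 1, 0, 1, 0, 1, 0, 1, 0],
       [0, 0, 1, 1, 1, 1, 0, 1, 0, 1, 0, 1, 1],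
       [1, 1, 0, 1, 0, 0, 0, 0, 0, 0, 1, 0, 1],
       [1, 1, 0, 1, 0, 0, 0, 0, 0, 0, 1, 0, 0],
       [1, 1, 0, 0, 0, 0, 1, 0, 1, 0, 1, 0, 1],
       [1, 1, 0, 0, 0, 0, 1, 0, 1, 0, 1, 0, 0]} := by
  rw [setOf_length_odd_weaklySelfAvoiding 6, setOf_length_twelve_weaklySelfAvoiding]
  ext x
  simp only [Set.mem_image2, Set.mem_insert_iff, Set.mem_singleton_iff, Set.mem_univ, true_and,
    Fin.exists_fin_two, @eq_comm _ _ x, or_and_right, exists_or, exists_eq_left,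
    List.cons_append, List.nil_append]
  tauto
end

section
/- There exists an infinite weakly self-avoiding word over a three-letter alphabet {0,1,2}. -/
/-- The factor `x[a..b]` of a 1-indexed infinite word `x`. -/
def extractInf {α : Type*} (x : ℕ → α) (a b : ℕ) : List α :=
  (List.range (b + 1 - a)).map (fun k => x (a + k))

/-- An infinite word `x` is weakly self-avoiding if for all `i, j` with `1 ≤ i < j`,
the word `x[i..2i]` is not a factor of `x[j..2j]`. -/
def WeaklySelfAvoidingInf {α : Type*} (x : ℕ → α) : Prop :=
  ∀ i j : ℕ, 1 ≤ i → i < j → ¬ (extractInf x i (2 * i) <:+: extractInf x j (2 * j))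

/-!
The word is `2 0 0 1 0 1 1 0 1 1 1 0 ⋯`, whose runs of `1` have lengths `0, 1, 2, …`. The gaps
between consecutive zeros strictly increase, so a factor containing two consecutive zeros never
occurs again further right. The zeros are nevertheless so dense that `x[i..2i]` contains two of them
for every `i ≥ 2`; the remaining factor `x[1..2]` contains the only occurrence of the letter `2`.
-/

section Factors

variable {α : Type*} {x : ℕ → α}

theorem length_extractInf (a n : ℕ) : (extractInf x a (a + n)).length = n + 1 := by
  simp only [extractInf, List.length_map, List.length_range]
  omega

theorem getElem_extractInf {a b k : ℕ} (hk : k < (extractInf x a b).length) :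
    (extractInf x a b)[k] = x (a + k) := by
  simp only [extractInf, List.getElem_map, List.getElem_range]

theorem extractInf_isInfix_extractInf_iff {a c m n : ℕ} :
    extractInf x a (a + n) <:+: extractInf x c (c + m) ↔
      ∃ s, n + s ≤ m ∧ ∀ k ≤ n, x (c + s + k) = x (a + k) := by
  simp only [List.infix_iff_getElem?, length_extractInf, getElem_extractInf, Nat.lt_succ_iff]
  refine exists_congr fun s => ?_
  rw [show n + 1 + s ≤ m + 1 ↔ n + s ≤ m by omega]
  refine and_congr_right fun hs => forall₂_congr fun k hk => ?_
  rw [List.getElem?_eq_getElem (by rw [length_extractInf]; omega), getElem_extractInf,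
    Option.some_inj, Nat.add_comm k s, Nat.add_assoc]

theorem weaklySelfAvoidingInf_iff :
    WeaklySelfAvoidingInf x ↔ ∀ i q, 1 ≤ i → i < q → ∃ k ≤ i, x (q + k) ≠ x (i + k) := by
  simp only [WeaklySelfAvoidingInf, two_mul, extractInf_isInfix_extractInf_iff]
  constructor
  · intro h i q hi hiq
    by_contra! hrec
    exact h i q hi hiq ⟨0, hiq.le, hrec⟩
  · rintro h i j hi hij ⟨s, -, hrec⟩
    obtain ⟨k, hk, hne⟩ := h i (j + s) hi (by omega)
    exact hne (hrec k hk)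

theorem exists_ne_of_consecutive_mem_factor {a : α} {p : ℕ → ℕ} (hp : StrictMono p)
    (hgap : StrictMono fun m => p (m + 1) - p m) (hx : ∀ n, x n = a ↔ n ∈ Set.range p)
    {i n m q : ℕ} (hm : i ≤ p m) (hm' : p (m + 1) ≤ i + n) (hiq : i < q) :
    ∃ k ≤ n, x (q + k) ≠ x (i + k) := by
  by_contra! hrec
  have mem_range_shift {l : ℕ} (hil : i ≤ p l) (hln : p l ≤ i + n) :
      q + (p l - i) ∈ Set.range p := by
    rw [← hx, hrec _ (by omega), Nat.add_sub_cancel' hil, hx]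
    exact Set.mem_range_self l
  have hlt : p m < p (m + 1) := hp m.lt_succ_self
  obtain ⟨b, hb⟩ := mem_range_shift hm (by omega)
  obtain ⟨c, hc⟩ := mem_range_shift (hm.trans hlt.le) hm'
  have hmb : m < b := hp.lt_iff_lt.mp (by omega)
  have hbc : b < c := hp.lt_iff_lt.mp (by omega)
  have hgap_lt : p (m + 1) - p m < p (b + 1) - p b := hgap hmb
  have hle : p (b + 1) ≤ p c := hp.monotone hbc
  omega

end Factors

theorem exists_consecutive_mem_Icc_two_mul {p : ℕ → ℕ} (hp : StrictMono p) (h₀ : p 1 ≤ 2 * p 0)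
    (hstep : ∀ m, p (m + 2) ≤ 2 * (p m + 1)) {i : ℕ} (hi : p 0 ≤ i) :
    ∃ m, i ≤ p m ∧ p (m + 1) ≤ 2 * i := by
  induction i, hi using Nat.le_induction with
  | base => exact ⟨0, le_rfl, h₀⟩
  | succ i _ ih =>
    obtain ⟨m, him, hmi⟩ := ih
    -- Moving the window right loses a term only if it started at `p m`; `hstep` is that case.
    rcases him.lt_or_eq with hlt | rfl
    · exact ⟨m, hlt, by omega⟩
    · exact ⟨m + 1, hp m.lt_succ_self, hstep m⟩

/-- The position of the `m`-th zero of `growingRuns`, counting zeros from `m = 0`: the first zero is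
at position `2`, and the gaps `1, 2, 3, …` between consecutive zeros add up to a binomial
coefficient. -/
def zeroPos (m : ℕ) : ℕ := (m + 1).choose 2 + 2

theorem zeroPos_succ (m : ℕ) : zeroPos (m + 1) = zeroPos m + (m + 1) := by
  rw [zeroPos, zeroPos, Nat.choose_succ_succ' (m + 1) 1, Nat.choose_one_right]
  ring

theorem strictMono_zeroPos : StrictMono zeroPos :=
  strictMono_nat_of_lt_succ fun m => by rw [zeroPos_succ]; omega

theorem strictMono_zeroPos_gap : StrictMono fun m => zeroPos (m + 1) - zeroPos m := by
  simp only [zeroPos_succ, Nat.add_sub_cancel_left]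
  exact fun _ _ => Nat.succ_lt_succ

theorem zeroPos_add_two_le (m : ℕ) : zeroPos (m + 2) ≤ 2 * (zeroPos m + 1) := by
  have linear_bound : 2 * m + 1 ≤ zeroPos m := by
    induction m with
    | zero => decide
    | succ m ih =>
      have two_le : 2 ≤ zeroPos m := Nat.le_add_left _ _
      rw [zeroPos_succ]
      omega
  rw [zeroPos_succ, zeroPos_succ]
  omega

open Classical in
/-- The word `2 0 0 1 0 1 1 0 1 1 1 0 ⋯`, in which the zeros are separated by runs of `1` of lengths
`0, 1, 2, …`. The value at the unused position `0` is the junk letter `1`. -/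
noncomputable def growingRuns (n : ℕ) : Fin 3 :=
  if n ∈ Set.range zeroPos then 0 else if n = 1 then 2 else 1

theorem growingRuns_eq_zero_iff (n : ℕ) : growingRuns n = 0 ↔ n ∈ Set.range zeroPos := by
  unfold growingRuns
  split_ifs <;> simp_all

theorem growingRuns_eq_two_iff (n : ℕ) : growingRuns n = 2 ↔ n = 1 := by
  have one_notMem : 1 ∉ Set.range zeroPos := by
    rintro ⟨m, hm⟩
    simp only [zeroPos] at hm
    omega
  unfold growingRuns
  split_ifs with hzero hone
  · simpa using ne_of_mem_of_not_mem hzero one_notMem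
  · simpa using hone
  · simpa using hone

theorem stmt_8 :
    ∃ x : ℕ → Fin 3, WeaklySelfAvoidingInf x := by
  refine ⟨growingRuns, weaklySelfAvoidingInf_iff.mpr fun i q hi hiq => ?_⟩
  rcases hi.eq_or_lt with rfl | hi
  · refine ⟨0, zero_le_one, fun hrec => hiq.ne' ?_⟩
    exact (growingRuns_eq_two_iff q).mp (hrec.trans ((growingRuns_eq_two_iff 1).mpr rfl))
  · obtain ⟨m, hm, hm'⟩ := exists_consecutive_mem_Icc_two_mul strictMono_zeroPos
      (by decide) zeroPos_add_two_le hi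
    exact exists_ne_of_consecutive_mem_factor strictMono_zeroPos strictMono_zeroPos_gap
      growingRuns_eq_zero_iff hm (by omega) hiq
end

section
/- Define f_{2n+1} = 5·2^n − 2 for n ≥ 0 and f_{2n} = 7·2^{n−1} − 2 for n ≥ 1. Let x be the infinite word over {0,1,2} with x[1] = x[2] = 2, x[p] = 0 exactly when p = f_i for some i ≥ 1, and x[p] = 1 for all other positions p. Then for every i ≥ 3, the factor x[i..2i] contains exactly two occurrences of the letter 0; equivalently, for every i ≥ 3 exactly two of the numbers f_1, f_2, f_3, … lie in the interval [i, 2i]. -/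
/-!
The sequence satisfies `f (j + 2) = 2 * f j + 2`. If `f m` is its first term that is at least `i`,
then `f (m + 1) = 2 * f (m - 1) + 2 ≤ 2 * i` because `f (m - 1) < i` (for `m = 1`, simply
`f 2 = 5 < 2 * 3`), whereas `f (m + 2) = 2 * f m + 2 > 2 * i`. Hence the terms in `[i, 2 * i]` are
exactly `f m` and `f (m + 1)`.
-/

theorem extractInf_eq_map_range' {α : Type*} (x : ℕ → α) (a b : ℕ) :
    extractInf x a b = (List.range' a (b + 1 - a)).map x := by
  simp [extractInf, List.range'_eq_map_range, Function.comp_def]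

theorem count_extractInf {α : Type*} [DecidableEq α] (x : ℕ → α) (c : α) (a b : ℕ) :
    (extractInf x a b).count c = ((Finset.Icc a b).filter (x · = c)).card := by
  rw [extractInf_eq_map_range', Nat.Icc_eq_range', List.count, List.countP_map,
    List.countP_eq_length_filter]
  rfl

theorem strictMono_of_add_two_eq {α : Type*} [Preorder α] {g : ℕ → α} {φ : α → α}
    (hφ : StrictMono φ) (hrec : ∀ n, g (n + 2) = φ (g n)) (h01 : g 0 < g 1) (h12 : g 1 < g 2) :
    StrictMono g := by
  refine strictMono_nat_of_lt_succ fun n ↦ ?_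
  induction n using Nat.twoStepInduction with
  | zero => exact h01
  | one => exact h12
  | more n ih _ => simpa only [hrec] using hφ ih

section TwoTermWindow

variable {g : ℕ → ℕ} {i : ℕ} (hmono : StrictMono g) (hlower : ∀ n, 2 * g n < g (n + 2))
  (hupper : ∀ n, g (n + 2) ≤ 2 * g n + 2) (hi : g 1 ≤ 2 * i)

include hmono hlower hupper hi

theorem exists_forall_mem_Icc_two_mul_iff :
    ∃ m, ∀ n, g n ∈ Finset.Icc i (2 * i) ↔ n = m ∨ n = m + 1 := by
  have hexists : ∃ n, i ≤ g n := ⟨i, hmono.le_apply⟩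
  obtain ⟨m, hm, hmin⟩ : ∃ m, i ≤ g m ∧ ∀ n < m, g n < i :=
    ⟨Nat.find hexists, Nat.find_spec hexists, fun n hn ↦ not_le.1 (Nat.find_min hexists hn)⟩
  have hsecond : g (m + 1) ≤ 2 * i := by
    cases m with
    | zero => exact hi
    | succ k =>
      have hprev : g k < i := hmin k k.lt_succ_self
      linarith [hupper k]
  have hthird : 2 * i < g (m + 2) := by linarith [hlower m]
  have hfirst : g m < g (m + 1) := hmono m.lt_succ_self
  refine ⟨m, fun n ↦ ⟨fun hn ↦ ?_, ?_⟩⟩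
  · obtain ⟨hleft, hright⟩ := Finset.mem_Icc.1 hn
    have hge : m ≤ n := not_lt.1 fun h ↦ (hmin n h).not_ge hleft
    have hlt : n < m + 2 := hmono.lt_iff_lt.1 (hright.trans_lt hthird)
    omega
  · rintro (rfl | rfl) <;> exact Finset.mem_Icc.2 ⟨by omega, by omega⟩

theorem count_extractInf_two_mul_eq_two {α : Type*} [DecidableEq α] {x : ℕ → α} {a : α}
    (hx : ∀ p, 1 ≤ p → (x p = a ↔ p ∈ Set.range g)) :
    (extractInf x i (2 * i)).count a = 2 := by
  obtain ⟨m, hm⟩ := exists_forall_mem_Icc_two_mul_iff hmono hlower hupper hi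
  have hi_pos : 1 ≤ i := by
    have : g 0 < g 1 := hmono zero_lt_one
    omega
  have hfilter : (Finset.Icc i (2 * i)).filter (x · = a) = {g m, g (m + 1)} := by
    ext p
    simp only [Finset.mem_filter, Finset.mem_insert, Finset.mem_singleton]
    constructor
    · rintro ⟨hp, hxp⟩
      obtain ⟨n, rfl⟩ := (hx p (hi_pos.trans (Finset.mem_Icc.1 hp).1)).1 hxp
      exact ((hm n).1 hp).imp (congrArg g) (congrArg g)
    · intro hp
      obtain ⟨n, hn, rfl⟩ : ∃ n, (n = m ∨ n = m + 1) ∧ p = g n := by simpa using hp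
      have hgn : g n ∈ Finset.Icc i (2 * i) := (hm n).2 hn
      exact ⟨hgn, (hx _ (hi_pos.trans (Finset.mem_Icc.1 hgn).1)).2 ⟨n, rfl⟩⟩
  rw [count_extractInf, hfilter, Finset.card_pair (hmono m.lt_succ_self).ne]

end TwoTermWindow

section ClosedForm

variable {f : ℕ → ℕ} (hfodd : ∀ n : ℕ, f (2 * n + 1) = 5 * 2 ^ n - 2)
  (hfeven : ∀ n : ℕ, 1 ≤ n → f (2 * n) = 7 * 2 ^ (n - 1) - 2)

include hfodd hfeven

theorem add_two_eq_of_closed_form {j : ℕ} (hj : 1 ≤ j) : f (j + 2) = 2 * f j + 2 := by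
  obtain ⟨n, rfl | rfl⟩ := Nat.even_or_odd' j
  · obtain ⟨m, rfl⟩ : ∃ m, n = m + 1 := Nat.exists_eq_add_one.2 (by omega)
    have hpow : 1 ≤ 2 ^ m := Nat.one_le_two_pow
    rw [show 2 * (m + 1) + 2 = 2 * (m + 2) by ring, hfeven (m + 2) (by omega),
      hfeven (m + 1) (by omega), Nat.add_sub_cancel, show m + 2 - 1 = m + 1 by rfl, pow_succ]
    omega
  · have hpow : 1 ≤ 2 ^ n := Nat.one_le_two_pow
    rw [show 2 * n + 1 + 2 = 2 * (n + 1) + 1 by ring, hfodd, hfodd, pow_succ]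
    omega

theorem strictMono_comp_succ_of_closed_form : StrictMono fun n ↦ f (n + 1) := by
  have f_one : f 1 = 3 := hfodd 0
  have f_two : f 2 = 5 := hfeven 1 le_rfl
  have f_three : f 3 = 8 := hfodd 1
  have h12 : f 1 < f 2 := by omega
  have h23 : f 2 < f 3 := by omega
  have hφ : StrictMono fun k : ℕ ↦ 2 * k + 2 := fun k l (hkl : k < l) ↦
    show 2 * k + 2 < 2 * l + 2 by omega
  exact strictMono_of_add_two_eq hφ
    (fun n ↦ add_two_eq_of_closed_form hfodd hfeven n.succ_pos) h12 h23

end ClosedForm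

theorem stmt_10_general {α : Type*} [DecidableEq α] (f : ℕ → ℕ) (x : ℕ → α) (a : α)
    (hfodd : ∀ n : ℕ, f (2 * n + 1) = 5 * 2 ^ n - 2)
    (hfeven : ∀ n : ℕ, 1 ≤ n → f (2 * n) = 7 * 2 ^ (n - 1) - 2)
    (hx : ∀ p : ℕ, 1 ≤ p → (x p = a ↔ ∃ i : ℕ, 1 ≤ i ∧ f i = p)) :
    ∀ i : ℕ, 3 ≤ i → (extractInf x i (2 * i)).count a = 2 := by
  intro i hi
  have f_two : f 2 = 5 := hfeven 1 le_rfl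
  have hsecond : f 2 ≤ 2 * i := by omega
  have hrec (n : ℕ) : f (n + 3) = 2 * f (n + 1) + 2 :=
    add_two_eq_of_closed_form hfodd hfeven n.succ_pos
  have hrange (p : ℕ) : (∃ j, 1 ≤ j ∧ f j = p) ↔ p ∈ Set.range fun n ↦ f (n + 1) :=
    ⟨fun ⟨j, hj, hfj⟩ ↦ ⟨j - 1, by simpa only [Nat.sub_add_cancel hj] using hfj⟩,
      fun ⟨n, hn⟩ ↦ ⟨n + 1, n.succ_pos, hn⟩⟩
  exact count_extractInf_two_mul_eq_two (strictMono_comp_succ_of_closed_form hfodd hfeven)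
    (fun n ↦ by linarith [hrec n]) (fun n ↦ (hrec n).le) hsecond
    fun p hp ↦ (hx p hp).trans (hrange p)

theorem stmt_10 (f : ℕ → ℕ) (x : ℕ → Fin 3)
    (hfodd : ∀ n : ℕ, f (2 * n + 1) = 5 * 2 ^ n - 2)
    (hfeven : ∀ n : ℕ, 1 ≤ n → f (2 * n) = 7 * 2 ^ (n - 1) - 2)
    (hx1 : x 1 = 2) (hx2 : x 2 = 2)
    (hx0 : ∀ p : ℕ, 1 ≤ p → (x p = 0 ↔ ∃ i : ℕ, 1 ≤ i ∧ f i = p))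
    (hx1' : ∀ p : ℕ, 3 ≤ p → x p ≠ 0 → x p = 1) :
    ∀ i : ℕ, 3 ≤ i → (extractInf x i (2 * i)).count (0 : Fin 3) = 2 :=
  stmt_10_general f x 0 hfodd hfeven hx0
end

section
/- Over the binary alphabet {0,1}, the longest self-avoiding word (in the subsequence sense) has length 11: there exists a self-avoiding binary word of length 11, and no binary word of length 12 is self-avoiding. -/
/-- A finite word `x` of length `n` is self-avoiding (in the subsequence sense) if
for all `i, j` with `1 ≤ i < j` and `2j ≤ n`, the word `x[i..2i]` is not a
subsequence of `x[j..2j]`. -/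
def SelfAvoiding {α : Type*} (x : List α) : Prop :=
  ∀ i j : ℕ, 1 ≤ i → i < j → 2 * j ≤ x.length → ¬ List.Sublist (factorAt x i) (factorAt x j)

/-!
Let `x = x₁x₂⋯` be self-avoiding over the letters `a`, `b`, with `x₁ = a`. Every short enough block
lies in some window `x[j..2j]`, so `x[i..2i]` is not a subsequence of any short block starting after
position `i`. In particular no single letter fills `x[i..2i+1]`.

* If `x₂ = a`, then by avoidance of `aa` each later `a` is followed by `bb`; so `x[2..4] = abb`, and
  avoiding `abb` leaves no further `a`: the letter `b` fills `x[3..7]`.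
* If `x₂ = b`, then by avoidance of `ab` each later `a` is followed by an `a`. As `b` does not fill
  `x[2..5]`, there is an `a` in it, and from there on only `a`s: the letter `a` fills `x[5..11]`.

The second case also forces the shape `abᵏaᵐ`, attained at maximal length by `ab³a⁷`.

List indices start from `0`, so `x[k]` in the code is the letter `xₖ₊₁`.
-/

section Blocks

variable {α : Type*} {x : List α}

theorem take_two_drop {k : ℕ} (hk : k + 1 < x.length) :
    (x.drop k).take 2 = [x[k], x[k + 1]] := by
  rw [List.drop_eq_getElem_cons (show k < x.length by omega), List.take_succ_cons,
    List.take_one_drop_eq_of_lt_length hk, List.get_eq_getElem]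

theorem take_three_drop {k : ℕ} (hk : k + 2 < x.length) :
    (x.drop k).take 3 = [x[k], x[k + 1], x[k + 2]] := by
  rw [List.drop_eq_getElem_cons (show k < x.length by omega), List.take_succ_cons,
    take_two_drop (by omega)]

theorem take_drop_eq_replicate {k m : ℕ} {c : α} (hkm : k + m ≤ x.length)
    (hc : ∀ (l : ℕ) (hl : l < x.length), k ≤ l → l < k + m → x[l] = c) :
    (x.drop k).take m = List.replicate m c := by
  refine List.ext_getElem (by grind) fun l hl _ => ?_
  have hlm : l < m := by grind
  simpa using hc (k + l) (by omega) (by omega) (by omega)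

theorem take_drop_sublist_factorAt {j k m : ℕ} (hjk : j ≤ k + 1) (hkm : k + m ≤ 2 * j) :
    List.Sublist ((x.drop k).take m) (factorAt x j) := by
  obtain ⟨d, rfl⟩ : ∃ d, k = j - 1 + d := ⟨k - (j - 1), by omega⟩
  rw [← List.drop_drop, List.take_drop]
  exact (List.drop_sublist _ _).trans (List.take_sublist_take_left (by omega))

end Blocks

namespace SelfAvoiding

variable {α : Type*} {x : List α} {a b : α}

theorem not_factorAt_sublist_take_drop (hx : SelfAvoiding x) {i k m : ℕ} (hi : 1 ≤ i)
    (hin : i < x.length / 2) (hik : i ≤ k) (hm : m ≤ k + 2) (hkm : k + m ≤ 2 * (x.length / 2)) :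
    ¬ List.Sublist (factorAt x i) ((x.drop k).take m) := fun hsub =>
  -- The block lies in the window starting where it does, or else in the last window.
  hx i (min (k + 1) (x.length / 2)) hi (by omega) (by omega)
    (hsub.trans (take_drop_sublist_factorAt (by omega) (by omega)))

theorem exists_getElem_ne (hx : SelfAvoiding x) {i : ℕ} (hi : 1 ≤ i) (hin : i < x.length / 2)
    (c : α) : ∃ (k : ℕ) (hk : k < x.length), i ≤ k + 1 ∧ k ≤ 2 * i ∧ x[k] ≠ c := by
  by_contra! hc
  have window_eq : factorAt x i = List.replicate (i + 1) c :=
    take_drop_eq_replicate (by omega) fun l hl _ _ => hc l hl (by omega) (by omega)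
  have shifted_eq : (x.drop i).take (i + 1) = List.replicate (i + 1) c :=
    take_drop_eq_replicate (by omega) fun l hl _ _ => hc l hl (by omega) (by omega)
  refine hx.not_factorAt_sublist_take_drop hi hin le_rfl (m := i + 1) (by omega) (by omega) ?_
  rw [window_eq, shifted_eq]

theorem length_lt_ten_of_factorAt_one_eq_aa (hx : SelfAvoiding x)
    (hbin : ∀ c ∈ x, c = a ∨ c = b) (factorAt_one : factorAt x 1 = [a, a]) :
    x.length < 10 := by
  by_contra! hn
  have bb_of_a {k : ℕ} (hk : 1 ≤ k) (hk' : k ≤ 7) (ha : x[k] = a) :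
      x[k + 1] = b ∧ x[k + 2] = b := by
    have aa_avoided := hx.not_factorAt_sublist_take_drop (i := 1) (k := k) (m := 3)
      le_rfl (by omega) hk (by omega) (by omega)
    rw [factorAt_one, take_three_drop (by omega), ha, List.cons_sublist_cons,
      List.singleton_sublist, List.mem_pair, not_or] at aa_avoided
    exact ⟨(hbin _ (List.getElem_mem _)).resolve_left (Ne.symm aa_avoided.1),
      (hbin _ (List.getElem_mem _)).resolve_left (Ne.symm aa_avoided.2)⟩
  have factorAt_two : factorAt x 2 = [a, b, b] := by
    obtain ⟨-, h₁⟩ : x[0] = a ∧ x[1] = a := by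
      simpa using (take_two_drop (k := 0) (by omega)).symm.trans factorAt_one
    obtain ⟨h₂, h₃⟩ := bb_of_a le_rfl (by omega) h₁
    exact (take_three_drop (k := 1) (by omega)).trans (by simp only [h₁, h₂, h₃])
  have eq_b {k : ℕ} (hk : 2 ≤ k) (hk' : k ≤ 6) : x[k] = b := by
    refine (hbin _ (List.getElem_mem _)).resolve_left fun ha => ?_
    obtain ⟨hb, hb'⟩ := bb_of_a (by omega) (by omega) ha
    refine hx.not_factorAt_sublist_take_drop (i := 2) (k := k) (m := 3)
      (by omega) (by omega) hk (by omega) (by omega) ?_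
    rw [factorAt_two, take_three_drop (by omega), ha, hb, hb']
  obtain ⟨k, hkn, hk, hk', hkb⟩ := hx.exists_getElem_ne (i := 3) (by omega) (by omega) b
  exact hkb (eq_b (by omega) hk')

theorem length_lt_twelve_of_factorAt_one_eq_ab (hx : SelfAvoiding x)
    (hbin : ∀ c ∈ x, c = a ∨ c = b) (factorAt_one : factorAt x 1 = [a, b]) :
    x.length < 12 := by
  by_contra! hn
  have a_of_a {k : ℕ} (hk : 1 ≤ k) (hk' : k ≤ 10) (ha : x[k] = a) : x[k + 1] = a := by
    refine (hbin _ (List.getElem_mem _)).resolve_right fun hb => ?_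
    refine hx.not_factorAt_sublist_take_drop (i := 1) (k := k) (m := 2)
      le_rfl (by omega) hk (by omega) (by omega) ?_
    rw [factorAt_one, take_two_drop (by omega), ha, hb]
  obtain ⟨p, hpn, hp, hp', hpb⟩ := hx.exists_getElem_ne (i := 2) (by omega) (by omega) b
  have eq_a {k : ℕ} (hpk : p ≤ k) (hk : k ≤ 10) : x[k] = a := by
    induction k, hpk using Nat.le_induction with
    | base => exact (hbin _ (List.getElem_mem _)).resolve_right hpb
    | succ k hpk ih => exact a_of_a (by omega) (by omega) (ih (by omega))
  obtain ⟨k, hkn, hk, hk', hka⟩ := hx.exists_getElem_ne (i := 5) (by omega) (by omega) a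
  exact hka (eq_a (by omega) hk')

theorem length_lt_twelve (hx : SelfAvoiding x) (hbin : ∀ c ∈ x, c = a ∨ c = b) :
    x.length < 12 := by
  by_contra! hn
  wlog h₀ : x[0] = a generalizing a b
  · exact this (fun c hc => (hbin c hc).symm)
      ((hbin _ (List.getElem_mem _)).resolve_left h₀)
  have factorAt_one : factorAt x 1 = [a, x[1]] :=
    (take_two_drop (k := 0) (by omega)).trans (by rw [h₀])
  rcases hbin x[1] (List.getElem_mem _) with h₁ | h₁ <;> rw [h₁] at factorAt_one
  · have := hx.length_lt_ten_of_factorAt_one_eq_aa hbin factorAt_one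
    omega
  · exact hn.not_gt (hx.length_lt_twelve_of_factorAt_one_eq_ab hbin factorAt_one)

end SelfAvoiding

theorem selfAvoiding_cons_replicate_append_replicate {α : Type*} {a b : α} (hab : a ≠ b) :
    SelfAvoiding (a :: (List.replicate 3 b ++ List.replicate 7 a)) := by
  intro i j hi hij hj
  have hj' : j ≤ 5 := by grind
  interval_cases j <;> interval_cases i <;>
    simp [factorAt, List.replicate_succ, List.cons_sublist_cons', hab, hab.symm]

theorem stmt_19_general {α : Type*} {a b : α} (hab : a ≠ b) :
    (∃ x : List α, (∀ c ∈ x, c = a ∨ c = b) ∧ x.length = 11 ∧ SelfAvoiding x) ∧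
    (∀ x : List α, (∀ c ∈ x, c = a ∨ c = b) → 12 ≤ x.length → ¬ SelfAvoiding x) :=
  ⟨⟨_, by simp, by simp, selfAvoiding_cons_replicate_append_replicate hab⟩,
    fun _ hbin hn hx => hn.not_gt (hx.length_lt_twelve hbin)⟩

theorem stmt_19 :
    (∃ x : List (Fin 2), x.length = 11 ∧ SelfAvoiding x) ∧
    (∀ x : List (Fin 2), x.length = 12 → ¬ SelfAvoiding x) := by
  obtain ⟨⟨x, -, hx⟩, not_selfAvoiding⟩ := stmt_19_general (zero_ne_one (α := Fin 2))
  exact ⟨⟨x, hx⟩, fun y hy => not_selfAvoiding y (fun c _ => by omega) hy.ge⟩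
end
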